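/- arXiv:2510.24268 — 2 statements merged into one kernel-verified Lean document; each statement's English description precedes it below -/
import Mathlib

section
/- Let d ≥ 3 be an integer and let p > 1 + 2/d. For every α > 0 there exists exactly one function U ∈ C²([0,∞)) with U(0) = α and U'(0) = 0 such that for all ρ > 0, U''(ρ) + ((d−1)/ρ + ρ/2)·U'(ρ) + U(ρ)/(p−1) + |U(ρ)|^{p−1}U(ρ) = 0. -/
open Set

noncomputable section

/-- `U` is the expander profile with `U(0) = α`, `U'(0) = 0` (one-sided derivative at `0`),
`U ∈ C²([0,∞))`, solving `U'' + ((d−1)/ρ + ρ/2)U' + U/(p−1) + |U|^{p−1}U = 0` on `(0,∞)`. -/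
def IsExpander (d : ℕ) (p α : ℝ) (U : ℝ → ℝ) : Prop :=
  ContDiffOn ℝ 2 U (Ici 0) ∧ U 0 = α ∧ derivWithin U (Ici 0) 0 = 0 ∧
    ∀ ρ : ℝ, 0 < ρ →
      deriv (deriv U) ρ + (((d : ℝ) - 1) / ρ + ρ / 2) * deriv U ρ
        + U ρ / (p - 1) + |U ρ| ^ (p - 1) * U ρ = 0

/-!
The profile equation is a damped oscillator `U'' + a U' + f(U) = 0` with damping
`a(ρ) = (d - 1) / ρ + ρ / 2 ≥ 0` and an odd restoring force `f`, positive on `(0, ∞)`. The energy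
`U'² / 2 + ∫₀^U f` is nonincreasing, so every solution stays in `[-|α|, |α|]`, where `f` is
Lipschitz. Uniqueness follows because the damping only helps in the Grönwall estimate for
`(U' - V')² + (U - V)²`, in spite of its singularity at `0`. For existence, `f` may be replaced by a
globally Lipschitz force that agrees with it near `[-|α|, |α|]`; with the integrating factor
`w(r) = rⁿ exp (r² / 4)`, `n = d - 1`, the equation becomes `(w U')' = -w f(U)`, whose integrated
form is a contraction in the Bielecki norm weighted by `exp (-l x²)` for large `l`.
-/

section Calculus

theorem nonpos_of_hasDerivAt_le_mul {E E' : ℝ → ℝ} {C : ℝ} (hc : ContinuousOn E (Ici 0))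
    (hE : ∀ x, 0 < x → HasDerivAt E (E' x) x) (hle : ∀ x, 0 < x → E' x ≤ C * E x)
    (h0 : E 0 ≤ 0) {x : ℝ} (hx : 0 ≤ x) : E x ≤ 0 := by
  have hexp : ∀ x, HasDerivAt (fun x => Real.exp (-(C * x))) (Real.exp (-(C * x)) * -C) x :=
    fun x => by simpa using (((hasDerivAt_id x).const_mul C).neg).exp
  have hanti : AntitoneOn (fun x => Real.exp (-(C * x)) * E x) (Ici 0) := by
    refine antitoneOn_of_hasDerivWithinAt_nonpos (convex_Ici 0)
      (f' := fun x => Real.exp (-(C * x)) * (E' x - C * E x))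
      ((by fun_prop : Continuous fun x => Real.exp (-(C * x))).continuousOn.mul hc)
      (fun x hx => ?_) (fun x hx => ?_) <;> rw [interior_Ici] at hx
    · exact (((hexp x).mul (hE x hx)).congr_deriv (by ring)).hasDerivWithinAt
    · exact mul_nonpos_of_nonneg_of_nonpos (Real.exp_pos _).le (sub_nonpos.2 (hle x hx))
  have hx0 : Real.exp (-(C * x)) * E x ≤ E 0 := by
    simpa using hanti self_mem_Ici hx hx
  exact nonpos_of_mul_nonpos_right (hx0.trans h0) (Real.exp_pos _)

theorem hasDerivAt_abs_rpow_mul_self {q : ℝ} (hq : 0 < q) (x : ℝ) :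
    HasDerivAt (fun u : ℝ => |u| ^ q * u) ((q + 1) * |x| ^ q) x := by
  rcases eq_or_ne x 0 with rfl | hx
  · have hlim : Filter.Tendsto (fun u : ℝ => |u| ^ q) (nhdsWithin 0 {0}ᶜ) (nhds (|0| ^ q)) :=
      ((continuous_abs.rpow_const fun _ => Or.inr hq.le).tendsto 0).mono_left nhdsWithin_le_nhds
    rw [abs_zero, Real.zero_rpow hq.ne'] at hlim
    rw [abs_zero, Real.zero_rpow hq.ne', mul_zero, hasDerivAt_iff_tendsto_slope]
    refine hlim.congr' ?_
    filter_upwards [self_mem_nhdsWithin] with u hu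
    rw [slope_def_field, mul_zero, sub_zero, sub_zero, mul_div_cancel_right₀ _ hu]
  · have h := ((hasDerivAt_abs hx).rpow_const (p := q) (Or.inl (abs_ne_zero.2 hx))).mul
      (hasDerivAt_id x)
    have hpow : |x| ^ (q - 1) * |x| = |x| ^ q := by
      rw [← Real.rpow_add_one (abs_ne_zero.2 hx), sub_add_cancel]
    refine h.congr_deriv ?_
    rw [← hpow, ← sign_mul_self x, id_eq]
    ring

theorem integral_zero_neg_of_odd {f : ℝ → ℝ} (hf : f.Odd) (u : ℝ) :
    ∫ s in (0 : ℝ)..-u, f s = ∫ s in (0 : ℝ)..u, f s := by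
  have h := intervalIntegral.integral_comp_neg (a := 0) (b := u) f
  simp only [hf _, intervalIntegral.integral_neg, neg_zero] at h
  rw [intervalIntegral.integral_symm, ← h, neg_neg]

theorem integral_zero_le_integral_zero_iff_abs_le_abs {f : ℝ → ℝ} (hc : Continuous f)
    (hodd : f.Odd) (hpos : ∀ u, 0 < u → 0 < f u) {u v : ℝ} :
    ∫ s in (0 : ℝ)..u, f s ≤ ∫ s in (0 : ℝ)..v, f s ↔ |u| ≤ |v| := by
  have hderiv : ∀ x, HasDerivAt (fun u => ∫ s in (0 : ℝ)..u, f s) (f x) x := fun x =>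
    (hc.integral_hasStrictDerivAt 0 x).hasDerivAt
  have hmono : StrictMonoOn (fun u => ∫ s in (0 : ℝ)..u, f s) (Ici 0) := by
    refine strictMonoOn_of_deriv_pos (convex_Ici 0)
      (fun x _ => (hderiv x).continuousAt.continuousWithinAt) fun x hx => ?_
    rw [interior_Ici] at hx
    exact (hderiv x).deriv ▸ hpos x hx
  have habs : ∀ u, ∫ s in (0 : ℝ)..|u|, f s = ∫ s in (0 : ℝ)..u, f s := fun u => by
    rcases abs_choice u with h | h <;> rw [h]
    exact integral_zero_neg_of_odd hodd u
  rw [← habs u, ← habs v]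
  exact hmono.le_iff_le (abs_nonneg u) (abs_nonneg v)

theorem integral_mul_exp_mul_sq {l : ℝ} (hl : l ≠ 0) (x : ℝ) :
    ∫ r in (0 : ℝ)..x, r * Real.exp (l * r ^ 2) = (Real.exp (l * x ^ 2) - 1) / (2 * l) := by
  have hderiv : ∀ r, HasDerivAt (fun r => Real.exp (l * r ^ 2) / (2 * l))
      (r * Real.exp (l * r ^ 2)) r := fun r => by
    refine ((((hasDerivAt_pow 2 r).const_mul l).exp).div_const (2 * l)).congr_deriv ?_
    push_cast
    field_simp
  rw [intervalIntegral.integral_eq_sub_of_hasDerivAt (fun r _ => hderiv r)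
    (Continuous.intervalIntegrable (by fun_prop) _ _)]
  simp [sub_div]

theorem lipschitzWith_comp_projIcc {β : Type*} [PseudoEMetricSpace β] {f : ℝ → β} {a b : ℝ}
    {K : NNReal} (h : a ≤ b) (hf : LipschitzOnWith K f (Icc a b)) :
    LipschitzWith K fun u => f (projIcc a b h u) := by
  have hcomp := hf.to_restrict.comp (LipschitzWith.projIcc h)
  rwa [mul_one] at hcomp

theorem coe_projIcc_neg {R : ℝ} (h : -R ≤ R) (u : ℝ) :
    (projIcc (-R) R h (-u) : ℝ) = -projIcc (-R) R h u := by
  rw [coe_projIcc, coe_projIcc, max_min_distrib_left, max_eq_right h, max_neg_neg, ← min_neg_neg,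
    neg_neg]

theorem two_mul_neg_sub_add_le {κ L x y c : ℝ} (hκ : 0 ≤ κ) (hL : 0 ≤ L) (hc : |c| ≤ L * |y|) :
    2 * x * (-(κ * x) - c) + 2 * y * x ≤ (L + 1) * (x ^ 2 + y ^ 2) := by
  have hxc : -(2 * x * c) ≤ L * (x ^ 2 + y ^ 2) := calc
    -(2 * x * c) ≤ |2 * x * c| := neg_le_abs _
    _ = 2 * |x| * |c| := by rw [abs_mul, abs_mul, abs_two]
    _ ≤ 2 * |x| * (L * |y|) := by gcongr
    _ = L * (2 * |x| * |y|) := by ring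
    _ ≤ L * (|x| ^ 2 + |y| ^ 2) := by
        gcongr
        exact two_mul_le_add_sq _ _
    _ = L * (x ^ 2 + y ^ 2) := by rw [sq_abs, sq_abs]
  have hdamp : 0 ≤ κ * x ^ 2 := mul_nonneg hκ (sq_nonneg x)
  linarith [two_mul_le_add_sq x y]

theorem exists_fixedPoint_of_weighted_contraction {X : Type*} [TopologicalSpace X]
    {T : C(X, ℝ) → C(X, ℝ)} {w : C(X, ℝ)} (hw : ∀ x, 0 < w x) {C : ℝ}
    (hT0 : ∀ x, |T 0 x| ≤ C * w x) {c : NNReal} (hc : c < 1)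
    (hT : ∀ V W : C(X, ℝ), ∀ D, 0 ≤ D → (∀ x, |V x - W x| ≤ D * w x) →
      ∀ x, |T V x - T W x| ≤ c * D * w x) :
    ∃ W, T W = W := by
  have hdist : ∀ u v : BoundedContinuousFunction X ℝ, ∀ x,
      |T (w * u) x - T (w * v) x| ≤ c * dist u v * w x := fun u v => by
    refine hT _ _ _ dist_nonneg fun x => ?_
    have huv : |u x - v x| ≤ dist u v :=
      BoundedContinuousFunction.dist_coe_le_dist (f := u) (g := v) x
    change |w x * u x - w x * v x| ≤ _
    rw [← mul_sub, abs_mul, abs_of_pos (hw x), mul_comm]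
    exact mul_le_mul_of_nonneg_right huv (hw x).le
  have hbound : ∀ v : BoundedContinuousFunction X ℝ, ∀ x,
      ‖T (w * v) x / w x‖ ≤ c * dist v 0 + C := fun v x => by
    have h := hdist v 0 x
    rw [show w * ((0 : BoundedContinuousFunction X ℝ) : C(X, ℝ)) = 0 from mul_zero w] at h
    rw [norm_div, Real.norm_eq_abs, Real.norm_eq_abs, abs_of_pos (hw x), div_le_iff₀ (hw x)]
    linarith [hT0 x, abs_sub_abs_le_abs_sub (T (w * v) x) (T 0 x)]
  let Φ : BoundedContinuousFunction X ℝ → BoundedContinuousFunction X ℝ := fun v =>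
    .ofNormedAddCommGroup (fun x => T (w * v) x / w x)
      ((T (w * v)).continuous.div w.continuous fun x => (hw x).ne') _ (hbound v)
  have hΦ : ContractingWith c Φ := by
    refine ⟨hc, LipschitzWith.of_dist_le_mul fun u v => ?_⟩
    refine (BoundedContinuousFunction.dist_le (by positivity)).2 fun x => ?_
    change |T (w * u) x / w x - T (w * v) x / w x| ≤ _
    rw [← sub_div, abs_div, abs_of_pos (hw x), div_le_iff₀ (hw x)]
    exact hdist u v x
  obtain ⟨v, hv⟩ : ∃ v, Φ v = v := ⟨_, hΦ.fixedPoint_isFixedPt⟩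
  refine ⟨w * v, ContinuousMap.ext fun x => ?_⟩
  have hfix : T (w * v) x / w x = v x := DFunLike.congr_fun hv x
  exact ((div_eq_iff (hw x).ne').1 hfix).trans (mul_comm _ _)

end Calculus

/-- `U ∈ C²([0,∞))` is the displacement of an oscillator with damping `a` and restoring force `f`,
released at rest from `α`. As in `IsExpander`, the values of `U` on `(-∞, 0)` are irrelevant, and
`a` may be singular at `0`. -/
structure IsDampedSolution (a f : ℝ → ℝ) (α : ℝ) (U : ℝ → ℝ) : Prop where
  contDiffOn : ContDiffOn ℝ 2 U (Ici 0)
  apply_zero : U 0 = α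
  derivWithin_zero : derivWithin U (Ici 0) 0 = 0
  ode : ∀ r, 0 < r → deriv (deriv U) r + a r * deriv U r + f (U r) = 0

namespace IsDampedSolution

variable {a f g : ℝ → ℝ} {α : ℝ} {U V : ℝ → ℝ}

theorem of_hasDerivAt {U' U'' : ℝ → ℝ} (hU : ∀ r, HasDerivAt U (U' r) r)
    (hU' : ∀ r, HasDerivAt U' (U'' r) r) (hU'' : Continuous U'') (h0 : U 0 = α) (h0' : U' 0 = 0)
    (hode : ∀ r, 0 < r → U'' r + a r * U' r + f (U r) = 0) : IsDampedSolution a f α U := by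
  obtain rfl : deriv U = U' := funext fun r => (hU r).deriv
  obtain rfl : deriv (deriv U) = U'' := funext fun r => (hU' r).deriv
  have hC1 : ContDiff ℝ 1 (deriv U) :=
    contDiff_one_iff_deriv.2 ⟨fun r => (hU' r).differentiableAt, hU''⟩
  have hC2 : ContDiff ℝ (1 + 1) U :=
    contDiff_succ_iff_deriv.2 ⟨fun r => (hU r).differentiableAt, by simp, hC1⟩
  rw [one_add_one_eq_two] at hC2
  refine ⟨hC2.contDiffOn, h0, ?_, hode⟩
  rw [(hU 0).hasDerivWithinAt.derivWithin (uniqueDiffOn_Ici 0 0 self_mem_Ici), h0']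

theorem congr_force (h : IsDampedSolution a f α U) (hfg : ∀ r, 0 < r → f (U r) = g (U r)) :
    IsDampedSolution a g α U :=
  { h with ode := fun r hr => hfg r hr ▸ h.ode r hr }

theorem contDiffOn_derivWithin (h : IsDampedSolution a f α U) :
    ContDiffOn ℝ 1 (derivWithin U (Ici 0)) (Ici 0) :=
  h.contDiffOn.derivWithin (uniqueDiffOn_Ici 0) (by norm_num)

theorem hasDerivAt (h : IsDampedSolution a f α U) {r : ℝ} (hr : 0 < r) :
    HasDerivAt U (derivWithin U (Ici 0) r) r :=
  (h.contDiffOn.differentiableOn (by norm_num) r hr.le).hasDerivWithinAt.hasDerivAt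
    (Ici_mem_nhds hr)

theorem hasDerivAt_derivWithin (h : IsDampedSolution a f α U) {r : ℝ} (hr : 0 < r) :
    HasDerivAt (derivWithin U (Ici 0)) (-(a r * derivWithin U (Ici 0) r) - f (U r)) r := by
  have hd := (h.contDiffOn_derivWithin.differentiableOn one_ne_zero r hr.le).differentiableAt
    (Ici_mem_nhds hr)
  have heq : deriv U =ᶠ[nhds r] derivWithin U (Ici 0) := by
    filter_upwards [Ioi_mem_nhds hr] with x hx using (h.hasDerivAt hx).deriv
  refine hd.hasDerivAt.congr_deriv ?_
  rw [← heq.deriv_eq, ← heq.self_of_nhds]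
  linarith [h.ode r hr]

theorem antitoneOn_energy (h : IsDampedSolution a f α U) (ha : ∀ r, 0 < r → 0 ≤ a r) {P : ℝ → ℝ}
    (hP : ∀ u, HasDerivAt P (f u) u) :
    AntitoneOn (fun r => derivWithin U (Ici 0) r ^ 2 / 2 + P (U r)) (Ici 0) := by
  have hPc : Continuous P := continuous_iff_continuousAt.2 fun u => (hP u).continuousAt
  refine antitoneOn_of_hasDerivWithinAt_nonpos (convex_Ici 0)
    (f' := fun r => -(a r * derivWithin U (Ici 0) r ^ 2))
    (((h.contDiffOn_derivWithin.continuousOn.pow 2).div_const 2).add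
      (hPc.comp_continuousOn h.contDiffOn.continuousOn))
    (fun r hr => ?_) (fun r hr => ?_) <;> rw [interior_Ici] at hr
  · refine HasDerivAt.hasDerivWithinAt <| ((((h.hasDerivAt_derivWithin hr).pow 2).div_const 2).add
      ((hP (U r)).comp r (h.hasDerivAt hr))).congr_deriv ?_
    push_cast
    ring
  · exact neg_nonpos.2 (mul_nonneg (ha r hr) (sq_nonneg _))

theorem abs_le (h : IsDampedSolution a f α U) (ha : ∀ r, 0 < r → 0 ≤ a r) (hc : Continuous f)
    (hodd : f.Odd) (hpos : ∀ u, 0 < u → 0 < f u) {r : ℝ} (hr : 0 ≤ r) : |U r| ≤ |α| := by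
  have henergy := h.antitoneOn_energy ha (fun u => (hc.integral_hasStrictDerivAt 0 u).hasDerivAt)
    self_mem_Ici hr hr
  simp only [h.apply_zero, h.derivWithin_zero] at henergy
  rw [← integral_zero_le_integral_zero_iff_abs_le_abs hc hodd hpos]
  linarith [sq_nonneg (derivWithin U (Ici 0) r)]

theorem eqOn {K : NNReal} {s : Set ℝ} (hU : IsDampedSolution a f α U)
    (hV : IsDampedSolution a f α V) (ha : ∀ r, 0 < r → 0 ≤ a r) (hf : LipschitzOnWith K f s)
    (hUs : MapsTo U (Ici 0) s) (hVs : MapsTo V (Ici 0) s) : EqOn U V (Ici 0) := by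
  set U' := derivWithin U (Ici 0)
  set V' := derivWithin V (Ici 0)
  have hderiv : ∀ r, 0 < r → HasDerivAt (fun r => (U' r - V' r) ^ 2 + (U r - V r) ^ 2)
      (2 * (U' r - V' r) * (-(a r * (U' r - V' r)) - (f (U r) - f (V r)))
        + 2 * (U r - V r) * (U' r - V' r)) r := fun r hr => by
    refine ((((hU.hasDerivAt_derivWithin hr).sub (hV.hasDerivAt_derivWithin hr)).pow 2).add
      (((hU.hasDerivAt hr).sub (hV.hasDerivAt hr)).pow 2)).congr_deriv ?_
    simp only [Nat.cast_ofNat, Pi.sub_apply, Nat.add_one_sub_one, pow_one]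
    ring
  have hle : ∀ r, 0 < r →
      2 * (U' r - V' r) * (-(a r * (U' r - V' r)) - (f (U r) - f (V r)))
        + 2 * (U r - V r) * (U' r - V' r) ≤ (K + 1) * ((U' r - V' r) ^ 2 + (U r - V r) ^ 2) :=
    fun r hr => two_mul_neg_sub_add_le (ha r hr) K.2
      (hf.dist_le_mul _ (hUs hr.le) _ (hVs hr.le))
  intro r hr
  have hnonpos : (U' r - V' r) ^ 2 + (U r - V r) ^ 2 ≤ 0 := nonpos_of_hasDerivAt_le_mul
    (((hU.contDiffOn_derivWithin.continuousOn.sub hV.contDiffOn_derivWithin.continuousOn).pow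
      2).add ((hU.contDiffOn.continuousOn.sub hV.contDiffOn.continuousOn).pow 2))
    hderiv hle (by simp [hU.apply_zero, hV.apply_zero, hU.derivWithin_zero,
      hV.derivWithin_zero]) hr
  have hsq : (U r - V r) ^ 2 = 0 := by
    linarith [sq_nonneg (U' r - V' r), sq_nonneg (U r - V r)]
  exact sub_eq_zero.1 (pow_eq_zero_iff two_ne_zero |>.1 hsq)

end IsDampedSolution

/-- The average `(r w(r))⁻¹ ∫₀ʳ w G` of `G` with respect to the weight `w(r) = rⁿ exp (B r)`, which
turns the damped equation with damping `n / r + B'` into a first-order integral identity. The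
substitution `s = t r` removes the singularity at `r = 0`. -/
def radialMean (n : ℕ) (B G : ℝ → ℝ) (r : ℝ) : ℝ :=
  ∫ t in (0 : ℝ)..1, t ^ n * Real.exp (B (t * r) - B r) * G (t * r)

section RadialMean

variable {n : ℕ} {B b G H : ℝ → ℝ}

theorem continuous_radialMean (hB : Continuous B) (hG : Continuous G) :
    Continuous (radialMean n B G) :=
  intervalIntegral.continuous_parametric_intervalIntegral_of_continuous' (by fun_prop) 0 1

theorem radialMean_sub (hB : Continuous B) (hG : Continuous G) (hH : Continuous H) (r : ℝ) :
    radialMean n B (G - H) r = radialMean n B G r - radialMean n B H r := by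
  unfold radialMean
  rw [← intervalIntegral.integral_sub (Continuous.intervalIntegrable (by fun_prop) _ _)
    (Continuous.intervalIntegrable (by fun_prop) _ _)]
  simp only [Pi.sub_apply, mul_sub]

theorem abs_radialMean_le (hB : MonotoneOn B (Ici 0)) {r C : ℝ} (hr : 0 ≤ r)
    (hG : ∀ s ∈ Icc 0 r, |G s| ≤ C) : |radialMean n B G r| ≤ C := by
  have hle : ∀ t ∈ uIoc (0 : ℝ) 1, ‖t ^ n * Real.exp (B (t * r) - B r) * G (t * r)‖ ≤ C := by
    intro t ht
    rw [uIoc_of_le zero_le_one] at ht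
    have htr : 0 ≤ t * r := mul_nonneg ht.1.le hr
    have htr' : t * r ≤ r := mul_le_of_le_one_left hr ht.2
    have hexp : Real.exp (B (t * r) - B r) ≤ 1 :=
      Real.exp_le_one_iff.2 (sub_nonpos.2 (hB htr hr htr'))
    rw [Real.norm_eq_abs, abs_mul, abs_mul, Real.abs_exp, abs_of_nonneg (pow_nonneg ht.1.le n)]
    have hweight : t ^ n * Real.exp (B (t * r) - B r) ≤ 1 :=
      mul_le_one₀ (pow_le_one₀ ht.1.le ht.2) (Real.exp_pos _).le hexp
    exact (mul_le_of_le_one_left (abs_nonneg _) hweight).trans (hG _ ⟨htr, htr'⟩)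
  simpa [radialMean] using intervalIntegral.norm_integral_le_of_norm_le_const hle

theorem weight_mul_radialMean (n : ℕ) (B G : ℝ → ℝ) (r : ℝ) :
    r ^ n * Real.exp (B r) * (r * radialMean n B G r)
      = ∫ s in (0 : ℝ)..r, s ^ n * Real.exp (B s) * G s := by
  have hsubst := intervalIntegral.mul_integral_comp_mul_left (a := (0 : ℝ)) (b := 1)
    (f := fun s => s ^ n * Real.exp (B s) * G s) r
  rw [mul_zero, mul_one] at hsubst
  rw [← hsubst, radialMean, mul_left_comm, ← intervalIntegral.integral_const_mul]
  congr 1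
  refine intervalIntegral.integral_congr fun t _ => ?_
  simp only [mul_comm t r, Real.exp_sub, mul_pow]
  field_simp

theorem hasDerivAt_weight (n : ℕ) {r : ℝ} (hr : r ≠ 0) (hB : HasDerivAt B (b r) r) :
    HasDerivAt (fun r => r ^ n * Real.exp (B r))
      ((n / r + b r) * (r ^ n * Real.exp (B r))) r := by
  refine ((hasDerivAt_pow n r).mul hB.exp).congr_deriv ?_
  rcases n with _ | m
  · simp only [CharP.cast_eq_zero, zero_tsub, pow_zero, mul_one, zero_mul, one_mul, zero_add,
      zero_div]
    ring
  · rw [Nat.add_sub_cancel, pow_succ]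
    field_simp

theorem radialMean_zero (n : ℕ) (B G : ℝ → ℝ) : radialMean n B G 0 = G 0 / (n + 1) := by
  simp [radialMean, integral_pow, div_eq_inv_mul]

theorem hasDerivAt_mul_radialMean (hB : ∀ r, HasDerivAt B (b r) r) (hG : Continuous G) (r : ℝ) :
    HasDerivAt (fun r => r * radialMean n B G r)
      (G r - (n + r * b r) * radialMean n B G r) r := by
  have hBc : Continuous B := continuous_iff_continuousAt.2 fun r => (hB r).continuousAt
  rcases eq_or_ne r 0 with rfl | hr
  · have hval : G 0 - (n + 0 * b 0) * radialMean n B G 0 = radialMean n B G 0 := by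
      rw [radialMean_zero]
      field_simp
      ring
    rw [hval, hasDerivAt_iff_tendsto_slope]
    refine (((continuous_radialMean hBc hG).tendsto 0).mono_left nhdsWithin_le_nhds).congr' ?_
    filter_upwards [self_mem_nhdsWithin] with x hx
    rw [slope_def_field, zero_mul, sub_zero, sub_zero, mul_div_cancel_left₀ _ hx]
  · have hne : ∀ x : ℝ, x ≠ 0 → x ^ n * Real.exp (B x) ≠ 0 := fun x hx =>
      mul_ne_zero (pow_ne_zero n hx) (Real.exp_ne_zero _)
    have hint : HasDerivAt (fun r => ∫ s in (0 : ℝ)..r, s ^ n * Real.exp (B s) * G s)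
        (r ^ n * Real.exp (B r) * G r) r :=
      ((by fun_prop : Continuous fun s => s ^ n * Real.exp (B s) * G s).integral_hasStrictDerivAt
        0 r).hasDerivAt
    have hquot := (hint.div (hasDerivAt_weight n hr (hB r)) (hne r hr)).congr_of_eventuallyEq
      (f₁ := fun r => r * radialMean n B G r) (by
        filter_upwards [isOpen_ne.mem_nhds hr] with x hx
        rw [Pi.div_apply, ← weight_mul_radialMean, mul_div_cancel_left₀ _ (hne x hx)])
    refine hquot.congr_deriv ?_
    rw [← weight_mul_radialMean]
    field_simp

theorem abs_integral_mul_radialMean_le (hB : MonotoneOn B (Ici 0)) {C l x : ℝ} (hl : 0 < l)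
    (hx : 0 ≤ x) (hG : ∀ s, 0 ≤ s → |G s| ≤ C * Real.exp (l * s ^ 2)) :
    |∫ r in (0 : ℝ)..x, r * radialMean n B G r| ≤ C / (2 * l) * Real.exp (l * x ^ 2) := by
  have hC : 0 ≤ C := by simpa using (abs_nonneg _).trans (hG 0 le_rfl)
  have hmean : ∀ r, 0 ≤ r → |radialMean n B G r| ≤ C * Real.exp (l * r ^ 2) := fun r hr =>
    abs_radialMean_le hB hr fun s hs => (hG s hs.1).trans (by gcongr; exacts [hs.1, hs.2])
  have hle : ∀ r ∈ Ioc 0 x, ‖r * radialMean n B G r‖ ≤ C * (r * Real.exp (l * r ^ 2)) :=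
    fun r hr => by
      rw [Real.norm_eq_abs, abs_mul, abs_of_pos hr.1, mul_left_comm]
      exact mul_le_mul_of_nonneg_left (hmean r hr.1.le) hr.1.le
  calc |∫ r in (0 : ℝ)..x, r * radialMean n B G r|
      ≤ ∫ r in (0 : ℝ)..x, C * (r * Real.exp (l * r ^ 2)) :=
        intervalIntegral.norm_integral_le_of_norm_le hx (.of_forall hle)
          (Continuous.intervalIntegrable (by fun_prop) _ _)
    _ = C / (2 * l) * (Real.exp (l * x ^ 2) - 1) := by
        rw [intervalIntegral.integral_const_mul, integral_mul_exp_mul_sq hl.ne']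
        ring
    _ ≤ C / (2 * l) * Real.exp (l * x ^ 2) := by
        gcongr
        linarith

end RadialMean

/-- The right-hand side of the integrated form of `U'' + (n / r + b) U' + g(U) = 0`, `U 0 = α`,
`U' 0 = 0`, where `B` is a primitive of `b`: solutions are fixed points on `[0, ∞)`. -/
def picardMap (n : ℕ) (B g : ℝ → ℝ) (α : ℝ) (W : ℝ → ℝ) (x : ℝ) : ℝ :=
  α - ∫ r in (0 : ℝ)..x, r * radialMean n B (g ∘ W) r

section PicardMap

variable {n : ℕ} {B b g : ℝ → ℝ} {α : ℝ} {V W : ℝ → ℝ}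

theorem hasDerivAt_picardMap (hB : Continuous B) (hg : Continuous g) (hW : Continuous W) (x : ℝ) :
    HasDerivAt (picardMap n B g α W) (-(x * radialMean n B (g ∘ W) x)) x :=
  ((continuous_id.mul (continuous_radialMean hB (hg.comp hW))).integral_hasStrictDerivAt 0
    x).hasDerivAt.const_sub α

theorem continuous_picardMap (hB : Continuous B) (hg : Continuous g) (hW : Continuous W) :
    Continuous (picardMap n B g α W) :=
  continuous_iff_continuousAt.2 fun x => (hasDerivAt_picardMap hB hg hW x).continuousAt

theorem abs_picardMap_zero_le (hB : MonotoneOn B (Ici 0)) {l x : ℝ} (hl : 0 < l) (hx : 0 ≤ x) :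
    |picardMap n B g α 0 x| ≤ (|α| + |g 0| / (2 * l)) * Real.exp (l * x ^ 2) := by
  have hone : ∀ s, 1 ≤ Real.exp (l * s ^ 2) := fun s => Real.one_le_exp (by positivity)
  have hint := abs_integral_mul_radialMean_le (n := n) (G := g ∘ 0) hB hl hx fun s _ =>
    le_mul_of_one_le_right (abs_nonneg (g 0)) (hone s)
  calc |picardMap n B g α 0 x|
      ≤ |α| + |∫ r in (0 : ℝ)..x, r * radialMean n B (g ∘ 0) r| := abs_sub _ _
    _ ≤ |α| * Real.exp (l * x ^ 2) + |g 0| / (2 * l) * Real.exp (l * x ^ 2) :=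
        add_le_add (le_mul_of_one_le_right (abs_nonneg α) (hone x)) hint
    _ = (|α| + |g 0| / (2 * l)) * Real.exp (l * x ^ 2) := by ring

theorem abs_picardMap_sub_le (hBc : Continuous B) (hB : MonotoneOn B (Ici 0)) {K : NNReal}
    (hg : LipschitzWith K g) (hV : Continuous V) (hW : Continuous W) {D l x : ℝ} (hl : 0 < l)
    (hx : 0 ≤ x) (hVW : ∀ s, 0 ≤ s → |V s - W s| ≤ D * Real.exp (l * s ^ 2)) :
    |picardMap n B g α V x - picardMap n B g α W x|
      ≤ K * D / (2 * l) * Real.exp (l * x ^ 2) := by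
  have hGc : Continuous (g ∘ V) := hg.continuous.comp hV
  have hHc : Continuous (g ∘ W) := hg.continuous.comp hW
  have hdiff : picardMap n B g α V x - picardMap n B g α W x
      = -∫ r in (0 : ℝ)..x, r * radialMean n B (g ∘ V - g ∘ W) r := by
    have hGm := continuous_radialMean (n := n) hBc hGc
    have hHm := continuous_radialMean (n := n) hBc hHc
    simp only [picardMap, radialMean_sub hBc hGc hHc, mul_sub]
    rw [intervalIntegral.integral_sub (Continuous.intervalIntegrable (by fun_prop) _ _)
      (Continuous.intervalIntegrable (by fun_prop) _ _)]
    ring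
  rw [hdiff, abs_neg]
  refine abs_integral_mul_radialMean_le hB hl hx fun s hs => ?_
  calc |g (V s) - g (W s)| ≤ K * |V s - W s| := hg.dist_le_mul _ _
    _ ≤ K * (D * Real.exp (l * s ^ 2)) := by gcongr; exact hVW s hs
    _ = K * D * Real.exp (l * s ^ 2) := by ring

theorem exists_continuous_picardMap_eq (hBc : Continuous B) (hB : MonotoneOn B (Ici 0))
    {K : NNReal} (hg : LipschitzWith K g) (α : ℝ) :
    ∃ W : ℝ → ℝ, Continuous W ∧ ∀ x, 0 ≤ x → picardMap n B g α W x = W x := by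
  have hl : (0 : ℝ) < K + 1 := by positivity
  let w : C(ℝ, ℝ) := ⟨fun x => Real.exp ((K + 1) * x ^ 2), by fun_prop⟩
  -- Even reflection: the estimates for `picardMap` are available on `[0, ∞)` only.
  let T : C(ℝ, ℝ) → C(ℝ, ℝ) := fun W => ⟨fun x => picardMap n B g α W |x|,
    (continuous_picardMap hBc hg.continuous W.continuous).comp continuous_abs⟩
  have hT0 : ∀ x, |T 0 x| ≤ (|α| + |g 0| / (2 * (K + 1))) * w x := fun x => by
    simpa [T, w] using abs_picardMap_zero_le (n := n) (g := g) (α := α) hB hl (abs_nonneg x)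
  have hT : ∀ V W : C(ℝ, ℝ), ∀ D, 0 ≤ D → (∀ x, |V x - W x| ≤ D * w x) →
      ∀ x, |T V x - T W x| ≤ (1 / 2 : NNReal) * D * w x := fun V W D hD hVW x => by
    have hle := abs_picardMap_sub_le (n := n) (α := α) hBc hB hg V.continuous W.continuous hl
      (abs_nonneg x) fun s _ => hVW s
    rw [sq_abs] at hle
    refine hle.trans (mul_le_mul_of_nonneg_right ?_ (Real.exp_pos _).le)
    rw [div_le_iff₀ (by positivity)]
    push_cast
    linarith
  obtain ⟨W, hW⟩ := exists_fixedPoint_of_weighted_contraction (fun x => Real.exp_pos _) hT0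
    (by norm_num) hT
  refine ⟨W, W.continuous, fun x hx => ?_⟩
  simpa [T, abs_of_nonneg hx] using DFunLike.congr_fun hW x

theorem exists_isDampedSolution_of_lipschitzWith (n : ℕ) (hb : Continuous b)
    (hb0 : ∀ r, 0 < r → 0 ≤ b r) {K : NNReal} (hg : LipschitzWith K g) (α : ℝ) :
    ∃ U, IsDampedSolution (fun r => n / r + b r) g α U := by
  let B : ℝ → ℝ := fun r => ∫ s in (0 : ℝ)..r, b s
  have hB : ∀ r, HasDerivAt B (b r) r := fun r => (hb.integral_hasStrictDerivAt 0 r).hasDerivAt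
  have hBc : Continuous B := continuous_iff_continuousAt.2 fun r => (hB r).continuousAt
  have hBmono : MonotoneOn B (Ici 0) := by
    refine monotoneOn_of_deriv_nonneg (convex_Ici 0) hBc.continuousOn
      (fun r _ => (hB r).differentiableAt.differentiableWithinAt) fun r hr => ?_
    rw [interior_Ici] at hr
    exact (hB r).deriv ▸ hb0 r hr
  obtain ⟨W, hWc, hW⟩ := exists_continuous_picardMap_eq (n := n) hBc hBmono hg α
  have hGc : Continuous (g ∘ W) := hg.continuous.comp hWc
  have hMc : Continuous (radialMean n B (g ∘ W)) := continuous_radialMean hBc hGc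
  refine ⟨picardMap n B g α W, .of_hasDerivAt (hasDerivAt_picardMap hBc hg.continuous hWc)
    (fun r => (hasDerivAt_mul_radialMean hB hGc r).neg)
    (hGc.sub (by fun_prop)).neg (by simp [picardMap]) (by simp) fun r hr => ?_⟩
  rw [hW r hr.le, Function.comp_apply]
  field_simp
  ring

end PicardMap

theorem exists_isDampedSolution_unique {b f : ℝ → ℝ} (n : ℕ) (hb : Continuous b)
    (hb0 : ∀ r, 0 < r → 0 ≤ b r) (hf : LocallyLipschitz f) (hodd : f.Odd)
    (hpos : ∀ u, 0 < u → 0 < f u) (α : ℝ) :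
    ∃ U, IsDampedSolution (fun r => n / r + b r) f α U ∧
      ∀ V, IsDampedSolution (fun r => n / r + b r) f α V → EqOn V U (Ici 0) := by
  have ha : ∀ r, 0 < r → 0 ≤ n / r + b r := fun r hr => add_nonneg (by positivity) (hb0 r hr)
  -- The margin `1` keeps the truncated force positive on `(0, ∞)` even for `α = 0`.
  have hR : -(|α| + 1) ≤ |α| + 1 := by linarith [abs_nonneg α]
  obtain ⟨K, hK⟩ := hf.locallyLipschitzOn.exists_lipschitzOnWith_of_compact
    (isCompact_Icc (a := -(|α| + 1)) (b := |α| + 1))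
  set g : ℝ → ℝ := fun u => f (projIcc _ _ hR u)
  have hgK : LipschitzWith K g := lipschitzWith_comp_projIcc hR hK
  have hgodd : g.Odd := fun u => by simp only [g, coe_projIcc_neg, hodd _]
  have hgpos : ∀ u, 0 < u → 0 < g u := fun u hu =>
    hpos _ (lt_max_of_lt_right (lt_min (by positivity) hu))
  have hmem : ∀ {u}, |u| ≤ |α| → u ∈ Icc (-(|α| + 1)) (|α| + 1) := fun hu =>
    abs_le.1 (hu.trans (le_add_of_nonneg_right zero_le_one))
  obtain ⟨U, hUg⟩ := exists_isDampedSolution_of_lipschitzWith n hb hb0 hgK α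
  have hU := hUg.congr_force (g := f) fun r hr => congrArg (fun x : Icc _ _ => f x) <|
    projIcc_of_mem hR <| hmem <| hUg.abs_le ha hgK.continuous hgodd hgpos hr.le
  refine ⟨U, hU, fun V hV => hV.eqOn hU ha hK (fun r hr => hmem ?_) (fun r hr => hmem ?_)⟩
  exacts [hV.abs_le ha hf.continuous hodd hpos hr, hU.abs_le ha hf.continuous hodd hpos hr]

/-- The reaction term `u / (p - 1) + |u|^{p-1} u` of the profile equation. -/
def expanderForce (p u : ℝ) : ℝ :=
  u / (p - 1) + |u| ^ (p - 1) * u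

section ExpanderForce

variable {p : ℝ}

theorem isExpander_iff_isDampedSolution {d : ℕ} {α : ℝ} {U : ℝ → ℝ} :
    IsExpander d p α U ↔
      IsDampedSolution (fun ρ => (d - 1) / ρ + ρ / 2) (expanderForce p) α U := by
  simp only [IsExpander, add_assoc _ (U _ / _)]
  exact ⟨fun ⟨hC, h0, h0', hode⟩ => ⟨hC, h0, h0', hode⟩, fun h => ⟨h.1, h.2, h.3, h.4⟩⟩

theorem odd_expanderForce (p : ℝ) : (expanderForce p).Odd := fun u => by
  simp only [expanderForce, abs_neg]
  ring

theorem expanderForce_pos (hp : 1 < p) {u : ℝ} (hu : 0 < u) : 0 < expanderForce p u := by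
  have := sub_pos.2 hp
  unfold expanderForce
  positivity

theorem locallyLipschitz_expanderForce (hp : 1 < p) : LocallyLipschitz (expanderForce p) := by
  have hderiv : ∀ u, HasDerivAt (expanderForce p)
      (1 / (p - 1) + (p - 1 + 1) * |u| ^ (p - 1)) u := fun u =>
    ((hasDerivAt_id u).div_const _).add (hasDerivAt_abs_rpow_mul_self (sub_pos.2 hp) u)
  refine (contDiff_one_iff_deriv.2 ⟨fun u => (hderiv u).differentiableAt, ?_⟩).locallyLipschitz
  rw [funext fun u => (hderiv u).deriv]
  exact continuous_const.add (continuous_const.mul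
    (continuous_abs.rpow_const fun _ => Or.inr (sub_pos.2 hp).le))

end ExpanderForce

theorem stmt0_general (d : ℕ) (hd : 1 ≤ d) (p : ℝ) (hp : 1 < p) (α : ℝ) :
    ∃ U : ℝ → ℝ, IsExpander d p α U ∧
      ∀ V : ℝ → ℝ, IsExpander d p α V → EqOn V U (Ici 0) := by
  obtain ⟨n, rfl⟩ := Nat.exists_eq_add_of_le' hd
  simp only [isExpander_iff_isDampedSolution, Nat.cast_add_one, add_sub_cancel_right]
  exact exists_isDampedSolution_unique n (by fun_prop) (fun r hr => by positivity)
    (locallyLipschitz_expanderForce hp) (odd_expanderForce p) (fun _ => expanderForce_pos hp) α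

/-- For `d ≥ 3`, `p > 1 + 2/d` and `α > 0` there is exactly one function
`U ∈ C²([0,∞))` with `U(0) = α`, `U'(0) = 0` solving the expander ODE on `(0,∞)`. -/
theorem stmt0 (d : ℕ) (hd : 3 ≤ d) (p : ℝ) (hp : 1 + 2 / (d : ℝ) < p)
    (α : ℝ) (hα : 0 < α) :
    ∃ U : ℝ → ℝ, IsExpander d p α U ∧
      ∀ V : ℝ → ℝ, IsExpander d p α V → EqOn V U (Ici 0) :=
  stmt0_general d (by lia) p (lt_of_le_of_lt (le_add_of_nonneg_right (by positivity)) hp) α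
end
end

section
/- Let d ≥ 3 be an integer, p > 1 + 2/d, and α > 0. If U ∈ C²([0,∞)) satisfies U(0) = α, U'(0) = 0, and U''(ρ) + ((d−1)/ρ + ρ/2)·U'(ρ) + U(ρ)/(p−1) + |U(ρ)|^{p−1}U(ρ) = 0 for all ρ > 0, then U is bounded on [0,∞) and the limit lim_{ρ→∞} ρ^{2/(p−1)} U(ρ) exists and is finite. -/
open Set Filter

noncomputable section

/-!
The energy `U'² / 2 + G(U)`, with `G'(u) = u / (p - 1) + |u| ^ (p - 1) u`, decreases once the
friction `(d - 1) / ρ + ρ / 2` is nonnegative, so `U` is bounded. From then on the equation is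
treated as the linear one `U'' + (b / r + r / 2) U' + q U = 0`, where `b = d - 1` and
`q = m + |U| ^ (p - 1)` is bounded and at least `m = 1 / (p - 1)`. The slow mode
`V = U + (2 / r) U'` satisfies `V' = -(2 q / r) V + O(r⁻²) U'`, and the functional
`V² + U'² / r` has logarithmic derivative at most `-4 m / r + O(r⁻²)`; hence `V` and `U` are
`O(r ^ (-2 m))` and `U'` is `O(r ^ (1 / 2 - 2 m))`. This makes `q - m` decay like a power of `r`,
so that `r ^ (2 m) V` has an integrable derivative and converges, and `r ^ (2 m) U` converges to
the same limit.
-/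

open Asymptotics MeasureTheory
open scoped Topology

lemma isBoundedUnder_le_atTop_of_deriv_nonpos {f f' : ℝ → ℝ}
    (hf : ∀ᶠ x in atTop, HasDerivAt f (f' x) x) (hf' : ∀ᶠ x in atTop, f' x ≤ 0) :
    IsBoundedUnder (· ≤ ·) atTop f := by
  obtain ⟨R, hR⟩ := eventually_atTop.1 (hf.and hf')
  have hanti : AntitoneOn f (Ici R) :=
    antitoneOn_of_hasDerivWithinAt_nonpos (convex_Ici R)
      (fun x hx => (hR x hx).1.continuousAt.continuousWithinAt)
      (fun x hx => (hR x (interior_subset hx)).1.hasDerivWithinAt)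
      (fun x hx => (hR x (interior_subset hx)).2)
  exact isBoundedUnder_of_eventually_le (a := f R)
    ((eventually_ge_atTop R).mono fun x hx => hanti self_mem_Ici hx hx)

lemma isBigO_exp_of_deriv_le_mul {f f' φ φ' : ℝ → ℝ}
    (hf : ∀ᶠ x in atTop, HasDerivAt f (f' x) x) (hφ : ∀ᶠ x in atTop, HasDerivAt φ (φ' x) x)
    (hf0 : ∀ᶠ x in atTop, 0 ≤ f x) (hle : ∀ᶠ x in atTop, f' x ≤ φ' x * f x) :
    f =O[atTop] fun x => Real.exp (φ x) := by
  have hderiv : ∀ᶠ x in atTop, HasDerivAt (fun x => f x * Real.exp (-φ x))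
      ((f' x - φ' x * f x) * Real.exp (-φ x)) x := by
    filter_upwards [hf, hφ] with x hfx hφx
    exact (hfx.mul hφx.fun_neg.exp).congr_deriv (by ring)
  obtain ⟨C, hC⟩ := isBoundedUnder_le_atTop_of_deriv_nonpos hderiv <| hle.mono fun x hx =>
    mul_nonpos_of_nonpos_of_nonneg (sub_nonpos.2 hx) (Real.exp_pos _).le
  refine IsBigO.of_bound C ?_
  filter_upwards [eventually_map.1 hC, hf0] with x hCx hfx
  rw [Real.norm_of_nonneg hfx, Real.norm_of_nonneg (Real.exp_pos _).le]
  rwa [Real.exp_neg, ← div_eq_mul_inv, div_le_iff₀ (Real.exp_pos _)] at hCx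

lemma isBigO_rpow_of_deriv_le_mul {f f' : ℝ → ℝ} {a B : ℝ}
    (hf : ∀ᶠ x in atTop, HasDerivAt f (f' x) x) (hf0 : ∀ᶠ x in atTop, 0 ≤ f x)
    (hle : ∀ᶠ x in atTop, f' x ≤ (a / x + B / x ^ 2) * f x) :
    f =O[atTop] fun x => x ^ a := by
  have hφ : ∀ᶠ x : ℝ in atTop,
      HasDerivAt (fun x => Real.log x * a - B / x) (a / x + B / x ^ 2) x := by
    filter_upwards [eventually_ne_atTop 0] with x hx
    exact (((Real.hasDerivAt_log hx).mul_const a).sub ((hasDerivAt_inv hx).const_mul B)).congr_deriv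
      (by ring)
  have hexp : (fun x => Real.exp (-(B / x))) =O[atTop] fun _ => (1 : ℝ) := by
    have hlim : Tendsto (fun x : ℝ => B / x) atTop (𝓝 0) :=
      tendsto_const_nhds.div_atTop tendsto_id
    exact ((Real.continuous_exp.tendsto _).comp hlim.neg).isBigO_one ℝ
  calc f =O[atTop] fun x => Real.exp (Real.log x * a - B / x) :=
        isBigO_exp_of_deriv_le_mul hf hφ hf0 hle
    _ =ᶠ[atTop] fun x => x ^ a * Real.exp (-(B / x)) := by
        filter_upwards [eventually_gt_atTop 0] with x hx
        rw [Real.rpow_def_of_pos hx, ← Real.exp_add, sub_eq_add_neg]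
    _ =O[atTop] fun x => x ^ a := by simpa using (isBigO_refl _ _).mul hexp

lemma exists_tendsto_atTop_of_deriv_isBigO_rpow {E : Type*} [NormedAddCommGroup E]
    [NormedSpace ℝ E] [CompleteSpace E] {f f' : ℝ → E} {a : ℝ} (ha : a < -1)
    (hf : ∀ᶠ x in atTop, HasDerivAt f (f' x) x) (hO : f' =O[atTop] fun x => x ^ a) :
    ∃ L, Tendsto f atTop (𝓝 L) := by
  have hderiv : deriv f =ᶠ[atTop] f' := hf.mono fun x hx => hx.deriv
  have hint : IntegrableAtFilter (deriv f) atTop :=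
    (hderiv.trans_isBigO hO).integrableAtFilter
      (aestronglyMeasurable_deriv f volume).stronglyMeasurableAtFilter
      (integrableAtFilter_rpow_atTop_iff.2 ha)
  obtain ⟨R, hR⟩ := integrableAtFilter_atTop_iff.1 hint
  obtain ⟨S, hS⟩ := eventually_atTop.1 hf
  exact ⟨_, tendsto_limUnder_of_hasDerivAt_of_integrableOn_Ioi (a := max R S)
    (fun x hx => (hS x ((le_max_right R S).trans hx.le)).differentiableAt.hasDerivAt)
    (hR.mono_set fun x hx => (le_max_left R S).trans hx.le)⟩

lemma isBigO_const_div_pow (c : ℝ) (n : ℕ) :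
    (fun x : ℝ => c / x ^ n) =O[atTop] fun x => x ^ (-n : ℝ) := by
  refine (isBigO_const_mul_self c (fun x : ℝ => (x ^ n)⁻¹) atTop).trans_eventuallyEq ?_
  filter_upwards [eventually_ge_atTop 0] with x hx
  rw [Real.rpow_neg hx, Real.rpow_natCast]

lemma isBigO_rpow_of_sq_le {f g : ℝ → ℝ} {a : ℝ} (hle : ∀ᶠ x in atTop, f x ^ 2 ≤ g x)
    (hg : g =O[atTop] fun x => x ^ (2 * a)) : f =O[atTop] fun x => x ^ a := by
  refine IsBigO.of_pow two_ne_zero ?_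
  calc (f ^ 2) =O[atTop] g := IsBigO.of_bound' <| hle.mono fun x hx => by
        rw [Pi.pow_apply, Real.norm_of_nonneg (sq_nonneg _)]
        exact hx.trans (le_abs_self _)
    _ =O[atTop] fun x => x ^ (2 * a) := hg
    _ =ᶠ[atTop] (fun x => x ^ a) ^ 2 := by
        filter_upwards [eventually_ge_atTop 0] with x hx
        rw [Pi.pow_apply, ← Real.rpow_mul_natCast hx, Nat.cast_ofNat, mul_comm]

lemma isBigO_one_of_sub_const_isBigO_rpow_neg {f : ℝ → ℝ} {c ε : ℝ} (hε : 0 < ε)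
    (hf : (fun x => f x - c) =O[atTop] fun x => x ^ (-ε)) : f =O[atTop] fun _ => (1 : ℝ) := by
  simpa using (hf.trans ((tendsto_rpow_neg_atTop hε).isBigO_one ℝ)).add
    (isBigO_const_const c one_ne_zero _)

lemma exists_norm_le_of_continuousOn_Ici_of_isBigO_one {α E : Type*}
    [ConditionallyCompleteLinearOrder α] [TopologicalSpace α] [OrderTopology α]
    [SeminormedAddCommGroup E] {f : α → E} {a : α} (hf : ContinuousOn f (Ici a))
    (hO : f =O[atTop] fun _ => (1 : ℝ)) :
    ∃ C, ∀ x, a ≤ x → ‖f x‖ ≤ C := by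
  obtain ⟨B, hB⟩ := hO.bound
  have : Nonempty α := ⟨a⟩
  obtain ⟨R, hR⟩ := eventually_atTop.1 hB
  obtain ⟨B', hB'⟩ := (isCompact_Icc (b := R)).exists_bound_of_continuousOn
    (hf.mono Icc_subset_Ici_self)
  refine ⟨max B B', fun x hx => ?_⟩
  rcases le_total x R with hxR | hRx
  · exact le_max_of_le_right (hB' x ⟨hx, hxR⟩)
  · exact le_max_of_le_left (by simpa using hR x hRx)

lemma isBoundedUnder_energy {U W c g G : ℝ → ℝ}
    (hU : ∀ᶠ r in atTop, HasDerivAt U (W r) r)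
    (hW : ∀ᶠ r in atTop, HasDerivAt W (-c r * W r - g (U r)) r)
    (hG : ∀ u, HasDerivAt G (g u) u) (hc : ∀ᶠ r in atTop, 0 ≤ c r) :
    IsBoundedUnder (· ≤ ·) atTop fun r => W r ^ 2 / 2 + G (U r) := by
  refine isBoundedUnder_le_atTop_of_deriv_nonpos (f' := fun r => -(c r * W r ^ 2)) ?_ <|
    hc.mono fun r hr => neg_nonpos.2 (mul_nonneg hr (sq_nonneg _))
  filter_upwards [hU, hW] with r hUr hWr
  exact (((hWr.pow 2).div_const 2).add ((hG (U r)).comp r hUr)).congr_deriv (by ring)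

/-- `U` solves `U'' + (b / r + r / 2) U' + q U = 0` for all large `r`, with `U' = W`. The
nonlinear profile equation takes this form with `q` depending on `U`. -/
structure IsDampedOscillator (b : ℝ) (q U W : ℝ → ℝ) : Prop where
  hasDerivAt : ∀ᶠ r in atTop, HasDerivAt U (W r) r
  hasDerivAt_deriv : ∀ᶠ r in atTop, HasDerivAt W (-(b / r + r / 2) * W r - q r * U r) r

/-- The slow mode of a damped oscillator with `U' = W`. The coefficient `2 / r` cancels the
friction `-(r / 2) W` in `W'` against `U'`, so that, for bounded `q`, `W` enters the derivative with
weight `O(r⁻²)` only. -/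
def slowMode (U W : ℝ → ℝ) (r : ℝ) : ℝ := U r + 2 / r * W r

/-- The Lyapunov functional of a damped oscillator with `U' = W`. The weight `1 / r` of the fast
mode makes the mixed term of the derivative, after completing the square, cost only `O(r⁻²)`. -/
def slowFastEnergy (U W : ℝ → ℝ) (r : ℝ) : ℝ := slowMode U W r ^ 2 + W r ^ 2 / r

lemma slowFastEnergy_nonneg (U W : ℝ → ℝ) {r : ℝ} (hr : 0 ≤ r) : 0 ≤ slowFastEnergy U W r := by
  unfold slowFastEnergy
  positivity

lemma abs_mixedCoeff_le {Q b q r : ℝ} (hqQ : |q| ≤ Q) (hr : 1 ≤ r) :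
    |(8 * q - 4 - 4 * b) / r - 2 * q| ≤ 10 * Q + 4 + 4 * |b| := by
  have hnum : |8 * q - 4 - 4 * b| ≤ 8 * Q + 4 + 4 * |b| := by
    have hq := abs_le.1 hqQ
    rw [abs_le]
    constructor <;> linarith [neg_abs_le b, le_abs_self b]
  calc |(8 * q - 4 - 4 * b) / r - 2 * q| ≤ |(8 * q - 4 - 4 * b) / r| + |2 * q| := abs_sub _ _
    _ ≤ (8 * Q + 4 + 4 * |b|) + 2 * Q := by
      rw [abs_div, abs_of_pos (zero_lt_one.trans_le hr), abs_mul, abs_two]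
      gcongr
      exact (div_le_self (abs_nonneg _) hr).trans hnum
    _ = 10 * Q + 4 + 4 * |b| := by ring

lemma slowFastEnergy_dissipation_le {m Q b q r v w : ℝ} (hmq : m ≤ q) (hqQ : |q| ≤ Q)
    (hr : 1 ≤ r) (hr_sq : 2 * (8 * Q + 2 * |b|) ≤ r ^ 2) :
    -(4 * q / r) * v ^ 2 + ((8 * q - 4 - 4 * b) / r - 2 * q) / r * v * w
        - (1 - (4 * q - 2 * b - 1) / r ^ 2) * w ^ 2
      ≤ (-(4 * m) / r + ((10 * Q + 4 + 4 * |b|) ^ 2 / 2) / r ^ 2) * (v ^ 2 + w ^ 2 / r) := by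
  have hr0 : 0 < r := by linarith
  have hκ := abs_mixedCoeff_le (b := b) hqQ hr
  set A := 10 * Q + 4 + 4 * |b|
  set κ := (8 * q - 4 - 4 * b) / r - 2 * q
  have hslow : 4 * m / r * v ^ 2 ≤ 4 * q / r * v ^ 2 := by gcongr
  have hcross : κ / r * v * w ≤ A ^ 2 / 2 / r ^ 2 * v ^ 2 + w ^ 2 / 2 := by
    have hκ_sq : κ ^ 2 ≤ A ^ 2 := sq_le_sq.2 (hκ.trans (le_abs_self A))
    calc κ / r * v * w ≤ κ ^ 2 / 2 / r ^ 2 * v ^ 2 + w ^ 2 / 2 := by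
          linear_combination sq_nonneg (κ / r * v - w) / 2
      _ ≤ A ^ 2 / 2 / r ^ 2 * v ^ 2 + w ^ 2 / 2 := by gcongr
  have hfast : (4 * q - 2 * b - 1 + 4 * m) / r ^ 2 * w ^ 2 ≤ 1 / 2 * w ^ 2 := by
    refine mul_le_mul_of_nonneg_right ?_ (sq_nonneg w)
    rw [div_le_iff₀ (pow_pos hr0 2)]
    linarith [neg_abs_le b, le_of_abs_le hqQ]
  have hrest : 0 ≤ A ^ 2 / 2 / r ^ 2 * (w ^ 2 / r) := by positivity
  linear_combination hslow + hcross + hfast + hrest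

namespace IsDampedOscillator

variable {b : ℝ} {q U W : ℝ → ℝ}

lemma hasDerivAt_slowMode (h : IsDampedOscillator b q U W) :
    ∀ᶠ r in atTop, HasDerivAt (slowMode U W)
      (-(2 * q r / r) * slowMode U W r + (4 * q r - 2 - 2 * b) / r ^ 2 * W r) r := by
  filter_upwards [h.hasDerivAt, h.hasDerivAt_deriv, eventually_ne_atTop 0] with r hU hW hr
  refine (hU.add (((hasDerivAt_inv hr).const_mul 2).mul hW)).congr_deriv ?_
  simp only [slowMode]
  field_simp
  ring

lemma hasDerivAt_slowFastEnergy (h : IsDampedOscillator b q U W) :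
    ∀ᶠ r in atTop, HasDerivAt (slowFastEnergy U W)
      (-(4 * q r / r) * slowMode U W r ^ 2
        + ((8 * q r - 4 - 4 * b) / r - 2 * q r) / r * slowMode U W r * W r
        - (1 - (4 * q r - 2 * b - 1) / r ^ 2) * W r ^ 2) r := by
  filter_upwards [h.hasDerivAt_slowMode, h.hasDerivAt_deriv, eventually_ne_atTop 0]
    with r hV hW hr
  have hUV : U r = slowMode U W r - 2 / r * W r := by simp [slowMode]
  refine ((hV.pow 2).add ((hW.pow 2).div (hasDerivAt_id r) hr)).congr_deriv ?_
  rw [hUV]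
  simp only [Pi.pow_apply, id]
  field_simp
  ring

lemma slowFastEnergy_isBigO (h : IsDampedOscillator b q U W) {m : ℝ}
    (hm : ∀ᶠ r in atTop, m ≤ q r) (hq : q =O[atTop] fun _ => (1 : ℝ)) :
    slowFastEnergy U W =O[atTop] fun r => r ^ (-(4 * m)) := by
  obtain ⟨Q, hQ⟩ := hq.bound
  refine isBigO_rpow_of_deriv_le_mul h.hasDerivAt_slowFastEnergy
    ((eventually_ge_atTop 0).mono fun r hr => slowFastEnergy_nonneg U W hr)
    (B := (10 * Q + 4 + 4 * |b|) ^ 2 / 2) ?_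
  filter_upwards [hm, hQ, eventually_ge_atTop 1,
    (tendsto_pow_atTop two_ne_zero).eventually_ge_atTop (2 * (8 * Q + 2 * |b|))]
    with r hmr hQr hr hr_sq
  exact slowFastEnergy_dissipation_le hmr (by simpa using hQr) hr hr_sq

lemma slowMode_isBigO (h : IsDampedOscillator b q U W) {m : ℝ}
    (hm : ∀ᶠ r in atTop, m ≤ q r) (hq : q =O[atTop] fun _ => (1 : ℝ)) :
    slowMode U W =O[atTop] fun r => r ^ (-(2 * m)) := by
  refine isBigO_rpow_of_sq_le (g := slowFastEnergy U W) ?_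
    ((h.slowFastEnergy_isBigO hm hq).congr_right fun r => by ring_nf)
  filter_upwards [eventually_ge_atTop 0] with r hr
  exact le_add_of_nonneg_right (by positivity)

lemma deriv_isBigO (h : IsDampedOscillator b q U W) {m : ℝ}
    (hm : ∀ᶠ r in atTop, m ≤ q r) (hq : q =O[atTop] fun _ => (1 : ℝ)) :
    W =O[atTop] fun r => r ^ (1 / 2 - 2 * m) := by
  refine isBigO_rpow_of_sq_le (g := fun r => r * slowFastEnergy U W r) ?_
    (IsBigO.mul_atTop_rpow_of_isBigO_rpow 1 _ _ (by simpa using isBigO_refl _ _)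
      (h.slowFastEnergy_isBigO hm hq) (by linarith))
  filter_upwards [eventually_gt_atTop 0] with r hr
  rw [slowFastEnergy, mul_add, mul_div_cancel₀ _ hr.ne']
  exact le_add_of_nonneg_left (by positivity)

lemma isBigO_rpow (h : IsDampedOscillator b q U W) {m : ℝ}
    (hm : ∀ᶠ r in atTop, m ≤ q r) (hq : q =O[atTop] fun _ => (1 : ℝ)) :
    U =O[atTop] fun r => r ^ (-(2 * m)) := by
  have hW : (fun r => 2 / r * W r) =O[atTop] fun r => r ^ (-(2 * m)) :=
    IsBigO.mul_atTop_rpow_of_isBigO_rpow (-1) (1 / 2 - 2 * m) _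
      (by simpa using isBigO_const_div_pow 2 1) (h.deriv_isBigO hm hq) (by linarith)
  simpa [slowMode] using (h.slowMode_isBigO hm hq).sub hW

lemma hasDerivAt_rpow_mul_slowMode (h : IsDampedOscillator b q U W) (m : ℝ) :
    ∀ᶠ r in atTop, HasDerivAt (fun r => r ^ (2 * m) * slowMode U W r)
      (r ^ (2 * m) * ((4 * q r - 2 - 2 * b) * (1 / r ^ 2 * W r))
        - r ^ (2 * m) * ((q r - m) * (2 / r * slowMode U W r))) r := by
  filter_upwards [h.hasDerivAt_slowMode, eventually_ne_atTop 0] with r hV hr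
  refine ((Real.hasDerivAt_rpow_const (p := 2 * m) (Or.inl hr)).mul hV).congr_deriv ?_
  rw [Real.rpow_sub_one hr]
  field_simp
  ring

lemma exists_tendsto_rpow_mul_slowMode (h : IsDampedOscillator b q U W) {m ε : ℝ} (hε : 0 < ε)
    (hm : ∀ᶠ r in atTop, m ≤ q r) (hqm : (fun r => q r - m) =O[atTop] fun r => r ^ (-ε)) :
    ∃ L, Tendsto (fun r => r ^ (2 * m) * slowMode U W r) atTop (𝓝 L) := by
  have hq := isBigO_one_of_sub_const_isBigO_rpow_neg hε hqm
  set a : ℝ := max (-(3 / 2)) (-1 - ε)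
  have ha : a < -1 := max_lt (by norm_num) (by linarith)
  have hcoef : (fun r => 4 * q r - 2 - 2 * b) =O[atTop] fun r : ℝ => r ^ (0 : ℝ) := by
    have hconst (c : ℝ) : (fun _ : ℝ => c) =O[atTop] fun _ => (1 : ℝ) :=
      isBigO_const_const c one_ne_zero _
    simpa using ((hq.const_mul_left 4).sub (hconst 2)).sub (hconst (2 * b))
  have hfast : (fun r => r ^ (2 * m) * ((4 * q r - 2 - 2 * b) * (1 / r ^ 2 * W r)))
      =O[atTop] fun r => r ^ a :=
    IsBigO.mul_atTop_rpow_of_isBigO_rpow _ (-(3 / 2) - 2 * m) _ (isBigO_refl _ _)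
      (IsBigO.mul_atTop_rpow_of_isBigO_rpow _ (-(3 / 2) - 2 * m) _ hcoef
        (IsBigO.mul_atTop_rpow_of_isBigO_rpow (-2) _ _ (by simpa using isBigO_const_div_pow 1 2)
          (h.deriv_isBigO hm hq) (by linarith)) (by linarith))
      (by linarith [le_max_left (-(3 / 2)) (-1 - ε)])
  have hslow : (fun r => r ^ (2 * m) * ((q r - m) * (2 / r * slowMode U W r)))
      =O[atTop] fun r => r ^ a :=
    IsBigO.mul_atTop_rpow_of_isBigO_rpow _ (-ε - 1 - 2 * m) _ (isBigO_refl _ _)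
      (IsBigO.mul_atTop_rpow_of_isBigO_rpow _ (-1 - 2 * m) _ hqm
        (IsBigO.mul_atTop_rpow_of_isBigO_rpow (-1) _ _ (by simpa using isBigO_const_div_pow 2 1)
          (h.slowMode_isBigO hm hq) (by linarith)) (by linarith))
      (by linarith [le_max_right (-(3 / 2)) (-1 - ε)])
  exact exists_tendsto_atTop_of_deriv_isBigO_rpow ha (h.hasDerivAt_rpow_mul_slowMode m)
    (hfast.sub hslow)

lemma exists_tendsto_rpow_mul (h : IsDampedOscillator b q U W) {m ε : ℝ} (hε : 0 < ε)
    (hm : ∀ᶠ r in atTop, m ≤ q r) (hqm : (fun r => q r - m) =O[atTop] fun r => r ^ (-ε)) :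
    ∃ L, Tendsto (fun r => r ^ (2 * m) * U r) atTop (𝓝 L) := by
  have hq := isBigO_one_of_sub_const_isBigO_rpow_neg hε hqm
  obtain ⟨L, hL⟩ := h.exists_tendsto_rpow_mul_slowMode hε hm hqm
  have hfast : Tendsto (fun r => r ^ (2 * m) * (2 / r * W r)) atTop (𝓝 0) :=
    (IsBigO.mul_atTop_rpow_of_isBigO_rpow _ (-(1 / 2) - 2 * m) (-(1 / 2)) (isBigO_refl _ _)
      (IsBigO.mul_atTop_rpow_of_isBigO_rpow (-1) _ _ (by simpa using isBigO_const_div_pow 2 1)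
        (h.deriv_isBigO hm hq) (by linarith)) (by linarith)).trans_tendsto
      (tendsto_rpow_neg_atTop one_half_pos)
  refine ⟨L, ?_⟩
  simpa [slowMode, mul_add] using hL.sub hfast

end IsDampedOscillator

lemma hasDerivAt_sq_add_rpow_abs (m : ℝ) {s : ℝ} (hs : -1 < s) (u : ℝ) :
    HasDerivAt (fun u => m * (u ^ 2 / 2) + |u| ^ (s + 2) / (s + 2)) ((m + |u| ^ s) * u) u := by
  refine ((((hasDerivAt_pow 2 u).div_const 2).const_mul m).add
    ((hasDerivAt_abs_rpow u (by linarith)).div_const (s + 2))).congr_deriv ?_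
  have hs2 : s + 2 ≠ 0 := by linarith
  rw [add_sub_cancel_right]
  field_simp
  ring

namespace IsDampedOscillator

variable {b m s : ℝ} {U W : ℝ → ℝ}

lemma isBigO_one_of_rpow_abs (hm : 0 < m) (hs : -1 < s)
    (h : IsDampedOscillator b (fun r => m + |U r| ^ s) U W) :
    U =O[atTop] fun _ => (1 : ℝ) := by
  have hfriction : Tendsto (fun r : ℝ => b / r + r / 2) atTop atTop :=
    (tendsto_const_nhds.div_atTop tendsto_id).add_atTop (tendsto_id.atTop_div_const two_pos)
  obtain ⟨C, hC⟩ := isBoundedUnder_energy h.hasDerivAt h.hasDerivAt_deriv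
    (hasDerivAt_sq_add_rpow_abs m hs) (hfriction.eventually_ge_atTop 0)
  refine IsBigO.of_bound (Real.sqrt (C * 2 / m)) ((eventually_map.1 hC).mono fun r hr => ?_)
  rw [norm_one, mul_one]
  refine Real.abs_le_sqrt ?_
  rw [le_div_iff₀ hm]
  have hkinetic : 0 ≤ W r ^ 2 / 2 := by positivity
  have hpower : 0 ≤ |U r| ^ (s + 2) / (s + 2) := div_nonneg (by positivity) (by linarith)
  linarith

lemma exists_tendsto_rpow_mul_of_rpow_abs (hm : 0 < m) (hs : 0 < s)
    (h : IsDampedOscillator b (fun r => m + |U r| ^ s) U W) :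
    ∃ L, Tendsto (fun r => r ^ (2 * m) * U r) atTop (𝓝 L) := by
  have hle : ∀ᶠ r in atTop, m ≤ m + |U r| ^ s :=
    Eventually.of_forall fun r => le_add_of_nonneg_right (by positivity)
  have hbdd : (fun r => m + |U r| ^ s) =O[atTop] fun _ => (1 : ℝ) := by
    have hpow := (h.isBigO_one_of_rpow_abs hm (by linarith)).norm_left.rpow hs.le
      (Eventually.of_forall fun _ => zero_le_one)
    simp only [Real.one_rpow] at hpow
    exact (isBigO_const_const m one_ne_zero _).add hpow
  have hdecay : (fun r => m + |U r| ^ s - m) =O[atTop] fun r => r ^ (-(2 * m * s)) := by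
    have hnonneg : ∀ᶠ r : ℝ in atTop, 0 ≤ r ^ (-(2 * m)) :=
      (eventually_ge_atTop 0).mono fun r hr => Real.rpow_nonneg hr _
    simp only [add_sub_cancel_left]
    refine ((h.isBigO_rpow hle hbdd).norm_left.rpow hs.le hnonneg).trans_eventuallyEq ?_
    filter_upwards [eventually_ge_atTop 0] with r hr
    rw [← Real.rpow_mul hr, neg_mul]
  exact h.exists_tendsto_rpow_mul (by positivity) hle hdecay

end IsDampedOscillator

theorem stmt1_general {d κ s : ℝ} (hκ : 0 < κ) (hs : 0 < s) {U : ℝ → ℝ}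
    (hcont : ContinuousOn U (Ici 0)) (hdiff : ContDiffOn ℝ 2 U (Ioi 0))
    (hode : ∀ ρ : ℝ, 0 < ρ →
      deriv (deriv U) ρ + ((d - 1) / ρ + ρ / 2) * deriv U ρ + U ρ / κ + |U ρ| ^ s * U ρ = 0) :
    (∃ C : ℝ, ∀ ρ : ℝ, 0 ≤ ρ → |U ρ| ≤ C) ∧
      ∃ L : ℝ, Tendsto (fun ρ : ℝ => ρ ^ (2 / κ) * U ρ) atTop (𝓝 L) := by
  have hosc : IsDampedOscillator (d - 1) (fun r => 1 / κ + |U r| ^ s) U (deriv U) := by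
    have hC2 {r : ℝ} (hr : 0 < r) : ContDiffAt ℝ 2 U r := hdiff.contDiffAt (Ioi_mem_nhds hr)
    constructor <;> filter_upwards [eventually_gt_atTop 0] with r hr
    · exact ((hC2 hr).differentiableAt two_ne_zero).hasDerivAt
    · have hC1 : ContDiffAt ℝ 1 (deriv U) r := (hC2 hr).derivWithin (by norm_num)
      exact (hC1.differentiableAt one_ne_zero).hasDerivAt.congr_deriv
        (by linear_combination hode r hr)
  refine ⟨exists_norm_le_of_continuousOn_Ici_of_isBigO_one hcont
    (hosc.isBigO_one_of_rpow_abs (one_div_pos.2 hκ) (by linarith)), ?_⟩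
  simpa only [mul_one_div] using
    hosc.exists_tendsto_rpow_mul_of_rpow_abs (one_div_pos.2 hκ) hs

/-- Any expander profile is bounded on `[0,∞)` and `lim_{ρ→∞} ρ^{2/(p−1)} U(ρ)` exists
and is finite. -/
theorem stmt1 (d : ℕ) (hd : 3 ≤ d) (p : ℝ) (hp : 1 + 2 / (d : ℝ) < p)
    (α : ℝ) (hα : 0 < α) (U : ℝ → ℝ) (hU : IsExpander d p α U) :
    (∃ C : ℝ, ∀ ρ : ℝ, 0 ≤ ρ → |U ρ| ≤ C) ∧
      ∃ L : ℝ, Tendsto (fun ρ : ℝ => ρ ^ (2 / (p - 1)) * U ρ) atTop (nhds L) := by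
  obtain ⟨hC2, -, -, hode⟩ := hU
  have hp1 : 0 < p - 1 := sub_pos.2 (lt_of_le_of_lt (le_add_of_nonneg_right (by positivity)) hp)
  exact stmt1_general hp1 hp1 hC2.continuousOn (hC2.mono Ioi_subset_Ici_self) hode
end
end
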